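/- Let l > −1, let φ : ℝ → [0,∞] be measurable, let x ∈ ℝ³ with |x| = r > 0, and let u ∈ ℝ. Then, as an identity in [0,∞], ∫_{ℝ³} ((x·v)/r)² φ(½|v|² + u) |x × v|^{2l} dv = 2^{l+5/2} π c_{l,1/2} r^{2l} ∫_u^∞ φ(E)(E − u)^{l+3/2} dE, where c_{l,1/2} = ∫₀¹ s^l (1−s)^{1/2} ds. -/

import Mathlib

open MeasureTheory Real Set
open scoped ENNReal

/-- The cross product of two vectors in `ℝ³`. -/
noncomputable def cross3 (x v : Fin 3 → ℝ) : Fin 3 → ℝ :=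
  ![x 1 * v 2 - x 2 * v 1, x 2 * v 0 - x 0 * v 2, x 0 * v 1 - x 1 * v 0]

/-- The Euclidean norm on `ℝ³`. -/
noncomputable def norm3 (w : Fin 3 → ℝ) : ℝ :=
  Real.sqrt (w 0 ^ 2 + w 1 ^ 2 + w 2 ^ 2)

/-- The Euclidean scalar product on `ℝ³`. -/
noncomputable def dot3 (x v : Fin 3 → ℝ) : ℝ :=
  x 0 * v 0 + x 1 * v 1 + x 2 * v 2

theorem norm3_sq (v : Fin 3 → ℝ) : norm3 v ^ 2 = v 0 ^ 2 + v 1 ^ 2 + v 2 ^ 2 :=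
  Real.sq_sqrt (by positivity)

/-- Lagrange's identity for the cross product. -/
theorem norm3_cross3_sq (x v : Fin 3 → ℝ) :
    norm3 (cross3 x v) ^ 2 = norm3 x ^ 2 * norm3 v ^ 2 - dot3 x v ^ 2 := by
  simp only [norm3_sq, cross3, dot3, Matrix.cons_val]
  ring

/-- By rotation invariance of Lebesgue measure, a function of `|v|²` and of the component of `v`
along `x` may be integrated as if `x` pointed along the first coordinate axis. -/
theorem lintegral_dot3_norm3 (x : Fin 3 → ℝ) (hx : 0 < norm3 x) (F : ℝ → ℝ → ℝ≥0∞) :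
    ∫⁻ v : Fin 3 → ℝ, F (dot3 x v / norm3 x) (norm3 v ^ 2) =
      ∫⁻ v : Fin 3 → ℝ, F (v 0) (norm3 v ^ 2) := by
  have hnorm (y : EuclideanSpace ℝ (Fin 3)) : norm3 y.ofLp = ‖y‖ := by
    simp [norm3, EuclideanSpace.norm_eq, Fin.sum_univ_three]
  set e : EuclideanSpace ℝ (Fin 3) := (norm3 x)⁻¹ • WithLp.toLp 2 x with he
  have he1 : ‖e‖ = 1 := by
    rw [he, norm_smul, ← hnorm, norm_inv, Real.norm_of_nonneg hx.le]
    exact inv_mul_cancel₀ hx.ne'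
  obtain ⟨b, hb⟩ := Orthonormal.exists_orthonormalBasis_extension_of_card_eq (𝕜 := ℝ)
    (E := EuclideanSpace ℝ (Fin 3)) (ι := Fin 3) (by simp) (v := fun _ ↦ e) (s := {0}) (by
      refine ⟨fun _ ↦ he1, fun i j hij ↦ (hij (Subsingleton.elim _ _)).elim⟩)
  have hb0 : b 0 = e := hb 0 rfl
  have hrepr (y : EuclideanSpace ℝ (Fin 3)) : b.repr y 0 = dot3 x y.ofLp / norm3 x := by
    rw [b.repr_apply_apply, hb0, he, real_inner_smul_left]
    simp [PiLp.inner_apply, Fin.sum_univ_three, dot3]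
    ring
  have hlp (f : (Fin 3 → ℝ) → ℝ≥0∞) :
      ∫⁻ v, f v = ∫⁻ y : EuclideanSpace ℝ (Fin 3), f y.ofLp :=
    ((PiLp.volume_preserving_ofLp (Fin 3)).lintegral_comp_emb
      (MeasurableEquiv.toLp 2 (Fin 3 → ℝ)).symm.measurableEmbedding f).symm
  have hnorm_repr (y : EuclideanSpace ℝ (Fin 3)) : norm3 (b.repr y).ofLp = norm3 y.ofLp := by
    rw [hnorm, hnorm, LinearIsometryEquiv.norm_map]
  rw [hlp, hlp (fun v ↦ F (v 0) (norm3 v ^ 2)),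
    ← b.measurePreserving_repr.lintegral_comp_emb b.repr.toHomeomorph.measurableEmbedding
      (fun y ↦ F (y.ofLp 0) (norm3 y.ofLp ^ 2))]
  simp only [hrepr, hnorm_repr]

/-- The substitution `t = ρ²`. -/
theorem lintegral_Ioi_comp_sq (H : ℝ → ℝ≥0∞) :
    ∫⁻ ρ in Ioi (0 : ℝ), ENNReal.ofReal (2 * ρ) * H (ρ ^ 2) = ∫⁻ t in Ioi (0 : ℝ), H t := by
  have himg : (fun ρ : ℝ ↦ ρ ^ 2) '' Ioi 0 = Ioi 0 := by
    ext t
    constructor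
    · rintro ⟨ρ, hρ, rfl⟩
      exact pow_pos (mem_Ioi.1 hρ) 2
    · exact fun ht ↦ ⟨√t, Real.sqrt_pos.2 ht, Real.sq_sqrt (le_of_lt ht)⟩
  have h := lintegral_image_eq_lintegral_abs_deriv_mul (f := fun ρ : ℝ ↦ ρ ^ 2)
    (f' := fun ρ ↦ 2 * ρ) measurableSet_Ioi
    (fun ρ _ ↦ by simpa using (hasDerivAt_pow 2 ρ).hasDerivWithinAt)
    (fun a ha b hb hab ↦ (pow_left_inj₀ (le_of_lt ha) (le_of_lt hb) two_ne_zero).1 hab) H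
  rw [himg] at h
  rw [h]
  refine setLIntegral_congr_fun measurableSet_Ioi fun ρ hρ ↦ ?_
  rw [mem_Ioi] at hρ
  simp only [abs_of_pos (show 0 < 2 * ρ by positivity)]

/-- Integration of a radial function on the plane. -/
theorem lintegral_prod_sq_add_sq (H : ℝ → ℝ≥0∞) (hH : Measurable H) :
    ∫⁻ p : ℝ × ℝ, H (p.1 ^ 2 + p.2 ^ 2) = ENNReal.ofReal π * ∫⁻ t in Ioi (0 : ℝ), H t := by
  rw [← lintegral_comp_polarCoord_symm, polarCoord_target, Measure.volume_eq_prod,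
    ← Measure.prod_restrict]
  have hpt (p : ℝ × ℝ) : ENNReal.ofReal p.1 •
      H ((polarCoord.symm p).1 ^ 2 + (polarCoord.symm p).2 ^ 2) =
      (ENNReal.ofReal p.1 * H (p.1 ^ 2)) * 1 := by
    rw [polarCoord_symm_apply, smul_eq_mul, mul_one]
    congr 2
    linear_combination p.1 ^ 2 * Real.sin_sq_add_cos_sq p.2
  simp_rw [hpt]
  rw [lintegral_prod_mul (f := fun a ↦ ENNReal.ofReal a * H (a ^ 2)) (g := fun _ ↦ 1)
    (by fun_prop) (by fun_prop), ← lintegral_Ioi_comp_sq H]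
  simp_rw [ENNReal.ofReal_mul zero_le_two, mul_assoc]
  rw [lintegral_const_mul _ (by fun_prop), ← mul_assoc, mul_comm]
  congr 1
  simp only [lintegral_const, MeasurableSet.univ, Measure.restrict_apply, univ_inter,
    Real.volume_Ioo, one_mul]
  rw [← ENNReal.ofReal_mul pi_nonneg]
  ring_nf

/-- Cylindrical coordinates for a function of `v 0` and `|v|²`. -/
theorem lintegral_cylindrical (F : ℝ → ℝ → ℝ≥0∞) (hF : Measurable (Function.uncurry F)) :
    ∫⁻ v : Fin 3 → ℝ, F (v 0) (norm3 v ^ 2) =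
      ENNReal.ofReal π * ∫⁻ w, ∫⁻ t in Ioi (0 : ℝ), F w (w ^ 2 + t) := by
  have h1 := (volume_preserving_piFinSuccAbove (fun _ : Fin 3 ↦ ℝ) 0).symm
  have h2 := (MeasurePreserving.id (volume : Measure ℝ)).prod
    (volume_preserving_finTwoArrow ℝ).symm
  have h2e : MeasurableEmbedding (Prod.map id (MeasurableEquiv.finTwoArrow (α := ℝ)).symm :
      ℝ × ℝ × ℝ → _) := MeasurableEmbedding.id.prodMap (MeasurableEquiv.measurableEmbedding _)
  rw [← h1.lintegral_comp_emb (MeasurableEquiv.measurableEmbedding _)]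
  rw [Measure.volume_eq_prod, ← h2.lintegral_comp_emb h2e]
  have hpt (p : ℝ × ℝ × ℝ) (v : Fin 3 → ℝ)
      (hv : v = (MeasurableEquiv.piFinSuccAbove (fun _ : Fin 3 ↦ ℝ) 0).symm
        (Prod.map id (MeasurableEquiv.finTwoArrow (α := ℝ)).symm p)) :
      F (v 0) (norm3 v ^ 2) = F p.1 (p.1 ^ 2 + (p.2.1 ^ 2 + p.2.2 ^ 2)) := by
    have e0 : v 0 = p.1 := by rw [hv]; rfl
    have e1 : v 1 = p.2.1 := by rw [hv]; rfl
    have e2 : v 2 = p.2.2 := by rw [hv]; rfl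
    rw [norm3_sq, e0, e1, e2, add_assoc]
  simp_rw [fun p ↦ hpt p _ rfl]
  rw [lintegral_prod _ (by fun_prop), ← lintegral_const_mul _ (by fun_prop)]
  congr 1 with w
  exact lintegral_prod_sq_add_sq (fun t ↦ F w (w ^ 2 + t)) (by fun_prop)

/-- The substitution `E = (q + t) / 2 + u`. -/
theorem lintegral_Ioi_comp_energy (q u : ℝ) (g : ℝ → ℝ≥0∞) :
    ∫⁻ t in Ioi (0 : ℝ), g ((q + t) / 2 + u) = 2 * ∫⁻ E in Ioi (q / 2 + u), g E := by
  have himg : (fun t : ℝ ↦ (q + t) / 2 + u) '' Ioi 0 = Ioi (q / 2 + u) := by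
    ext E
    simp only [mem_image, mem_Ioi]
    constructor
    · rintro ⟨t, ht, rfl⟩
      linarith
    · exact fun hE ↦ ⟨2 * (E - u) - q, by linarith, by ring⟩
  have h := lintegral_image_eq_lintegral_abs_deriv_mul (f := fun t : ℝ ↦ (q + t) / 2 + u)
    (f' := fun _ ↦ 1 / 2) (s := Ioi 0) measurableSet_Ioi
    (fun t _ ↦ ((((hasDerivAt_id t).const_add q).div_const 2).add_const u).hasDerivWithinAt)
    (fun a _ b _ hab ↦ by simp only at hab; linarith) g
  rw [himg] at h
  rw [h, lintegral_const_mul' _ _ ENNReal.ofReal_ne_top, ← mul_assoc]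
  rw [← ENNReal.ofReal_ofNat, ← ENNReal.ofReal_mul zero_le_two]
  norm_num

/-- The substitution `t = w²` on the whole line. -/
theorem lintegral_comp_sq (K : ℝ → ℝ≥0∞) :
    ∫⁻ w : ℝ, K (w ^ 2) = ∫⁻ t in Ioi (0 : ℝ), ENNReal.ofReal ((√t)⁻¹) * K t := by
  have hneg : ∫⁻ w in Iio (0 : ℝ), K (w ^ 2) = ∫⁻ w in Ioi (0 : ℝ), K (w ^ 2) := by
    have := (Measure.measurePreserving_neg (volume : Measure ℝ)).setLIntegral_comp_preimage_emb
      (MeasurableEquiv.neg ℝ).measurableEmbedding (fun w ↦ K (w ^ 2)) (Ioi 0)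
    simpa using this
  have hsplit : ∫⁻ w : ℝ, K (w ^ 2) = 2 * ∫⁻ w in Ioi (0 : ℝ), K (w ^ 2) := by
    rw [← lintegral_add_compl _ (measurableSet_Ioi (a := (0 : ℝ))), compl_Ioi,
      ← setLIntegral_congr Iio_ae_eq_Iic, hneg, two_mul]
  rw [hsplit, ← lintegral_Ioi_comp_sq (fun t ↦ ENNReal.ofReal ((√t)⁻¹) * K t),
    ← lintegral_const_mul' _ _ (by simp)]
  refine setLIntegral_congr_fun measurableSet_Ioi fun w hw ↦ ?_
  rw [mem_Ioi] at hw
  rw [Real.sqrt_sq hw.le, ← mul_assoc, ← ENNReal.ofReal_mul (by positivity), mul_assoc,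
    mul_inv_cancel₀ hw.ne']
  simp

/-- The substitution `t = a (1 - s)`. -/
theorem lintegral_Ioo_comp_mul_one_sub (a : ℝ) (ha : 0 < a) (g : ℝ → ℝ≥0∞) :
    ∫⁻ t in Ioo 0 a, g t =
      ∫⁻ s in Ioo (0 : ℝ) 1, ENNReal.ofReal a * g (a * (1 - s)) := by
  have himg : (fun s : ℝ ↦ a * (1 - s)) '' Ioo 0 1 = Ioo 0 a := by
    ext t
    simp only [mem_image, mem_Ioo]
    constructor
    · rintro ⟨s, ⟨h0, h1⟩, rfl⟩
      exact ⟨mul_pos ha (by linarith), by nlinarith⟩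
    · rintro ⟨h0, h1⟩
      refine ⟨1 - t / a, ⟨?_, ?_⟩, by field_simp; ring⟩
      · rw [sub_pos, div_lt_one ha]; exact h1
      · linarith [div_pos h0 ha]
  have h := lintegral_image_eq_lintegral_abs_deriv_mul (f := fun s : ℝ ↦ a * (1 - s))
    (f' := fun _ ↦ a * -1) (s := Ioo 0 1) measurableSet_Ioo
    (fun s _ ↦ (((hasDerivAt_id s).const_sub 1).const_mul a).hasDerivWithinAt)
    (fun s _ t _ hst ↦ by
      have := mul_left_cancel₀ ha.ne' hst
      linarith) g
  rw [himg] at h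
  simpa [abs_of_pos ha] using h

theorem lintegral_beta_weight (l : ℝ) (hl : -1 < l) :
    ∫⁻ s in Ioo (0 : ℝ) 1, ENNReal.ofReal (s ^ l * (1 - s) ^ ((1/2) : ℝ)) =
      ENNReal.ofReal (∫ s in (0:ℝ)..1, s ^ l * (1 - s) ^ ((1/2) : ℝ)) := by
  have hint : IntervalIntegrable (fun s : ℝ ↦ s ^ l * (1 - s) ^ ((1/2) : ℝ)) volume 0 1 :=
    (intervalIntegral.intervalIntegrable_rpow' hl).mul_continuousOn
      (Continuous.continuousOn (by
        exact (continuous_const.sub continuous_id).rpow_const fun _ ↦ Or.inr (by norm_num)))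
  rw [intervalIntegral.integral_of_le zero_le_one, ← setLIntegral_congr Ioo_ae_eq_Ioc.symm,
    ofReal_integral_eq_lintegral_ofReal hint.1]
  filter_upwards [ae_restrict_mem measurableSet_Ioc] with s hs
  exact mul_nonneg (rpow_nonneg hs.1.le _) (rpow_nonneg (by linarith [hs.2]) _)

/-- The integral over the radial velocity at fixed kinetic energy `a / 2`. -/
theorem lintegral_radial_velocity (l : ℝ) (hl : -1 < l) (a : ℝ) (ha : 0 < a) :
    ∫⁻ w : ℝ, (Iio a).indicator (fun q ↦ ENNReal.ofReal (q * (a - q) ^ l)) (w ^ 2) =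
      ENNReal.ofReal (a ^ (l + 3 / 2) * ∫ s in (0:ℝ)..1, s ^ l * (1 - s) ^ ((1/2) : ℝ)) := by
  rw [lintegral_comp_sq]
  have h1 (t : ℝ) : ENNReal.ofReal ((√t)⁻¹) *
      (Iio a).indicator (fun q ↦ ENNReal.ofReal (q * (a - q) ^ l)) t =
      (Iio a).indicator (fun q ↦ ENNReal.ofReal ((√q)⁻¹) * ENNReal.ofReal (q * (a - q) ^ l)) t := by
    by_cases ht : t ∈ Iio a <;> simp [ht]
  simp_rw [h1]
  rw [lintegral_indicator measurableSet_Iio, Measure.restrict_restrict measurableSet_Iio,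
    Iio_inter_Ioi, lintegral_Ioo_comp_mul_one_sub a ha, ENNReal.ofReal_mul (by positivity),
    ← lintegral_beta_weight l hl, ← lintegral_const_mul' _ _ ENNReal.ofReal_ne_top]
  refine setLIntegral_congr_fun measurableSet_Ioo fun s ⟨hs0, hs1⟩ ↦ ?_
  have hs : 0 < 1 - s := by linarith
  rw [← ENNReal.ofReal_mul (by positivity), ← ENNReal.ofReal_mul ha.le,
    ← ENNReal.ofReal_mul (by positivity)]
  congr 1
  have hsub : a - a * (1 - s) = a * s := by ring
  have h32 : a ^ (l + 3 / 2) = a ^ l * a * √a := by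
    rw [show l + 3 / 2 = l + 1 + 1 / 2 by ring, rpow_add ha, rpow_add_one ha.ne',
      Real.sqrt_eq_rpow]
  have hinv : (√(a * (1 - s)))⁻¹ * (a * (1 - s)) = √a * √(1 - s) := by
    rw [← Real.sqrt_mul ha.le]
    nth_rewrite 2 [← Real.mul_self_sqrt (show 0 ≤ a * (1 - s) by positivity)]
    rw [inv_mul_cancel_left₀ (by positivity)]
  rw [hsub, mul_rpow ha.le hs0.le, h32, ← Real.sqrt_eq_rpow]
  linear_combination a * (a ^ l * s ^ l) * hinv

theorem pressure_reduction_nonrelativistic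
    (l : ℝ) (hl : -1 < l) (φ : ℝ → ℝ≥0∞) (hφ : Measurable φ)
    (x : Fin 3 → ℝ) (r : ℝ) (hr : 0 < r) (hx : norm3 x = r) (u : ℝ) :
    (∫⁻ v : Fin 3 → ℝ,
        φ (1 / 2 * norm3 v ^ 2 + u) *
          ENNReal.ofReal ((dot3 x v / r) ^ 2 * norm3 (cross3 x v) ^ (2 * l))) =
      ENNReal.ofReal (2 ^ (l + 5 / 2) * π *
          (∫ s in (0:ℝ)..1, s ^ l * (1 - s) ^ ((1/2) : ℝ)) * r ^ (2 * l)) *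
        ∫⁻ E in Ioi u, φ E * ENNReal.ofReal ((E - u) ^ (l + 3 / 2)) := by
  have hcross (v : Fin 3 → ℝ) : norm3 (cross3 x v) ^ (2 * l) =
      r ^ (2 * l) * (norm3 v ^ 2 - (dot3 x v / r) ^ 2) ^ l := by
    have hsq : norm3 (cross3 x v) ^ 2 = r ^ 2 * (norm3 v ^ 2 - (dot3 x v / r) ^ 2) := by
      rw [norm3_cross3_sq, hx]
      field_simp
    have hnn : 0 ≤ norm3 v ^ 2 - (dot3 x v / r) ^ 2 :=
      nonneg_of_mul_nonneg_right (hsq ▸ sq_nonneg _) (by positivity)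
    have hpow {b : ℝ} (hb : 0 ≤ b) : b ^ (2 * l) = (b ^ 2) ^ l := by
      rw [rpow_mul hb, rpow_two]
    rw [hpow (b := norm3 _) (Real.sqrt_nonneg _), hsq, mul_rpow (by positivity) hnn, ← hpow hr.le]
  set c := ∫ s in (0:ℝ)..1, s ^ l * (1 - s) ^ ((1/2) : ℝ) with hc
  set F : ℝ → ℝ → ℝ≥0∞ := fun w n ↦
    φ (n / 2 + u) * ENNReal.ofReal (r ^ (2 * l) * (w ^ 2 * (n - w ^ 2) ^ l)) with hFdef
  have hF : Measurable (Function.uncurry F) := by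
    simp only [hFdef, Function.uncurry_def]
    fun_prop
  have hstart (v : Fin 3 → ℝ) : φ (1 / 2 * norm3 v ^ 2 + u) *
      ENNReal.ofReal ((dot3 x v / r) ^ 2 * norm3 (cross3 x v) ^ (2 * l)) =
      F (dot3 x v / norm3 x) (norm3 v ^ 2) := by
    rw [hcross, hx, hFdef, one_div_mul_eq_div]
    congr 2
    ring
  set K : ℝ → ℝ → ℝ≥0∞ := fun w E ↦ (Iio (2 * (E - u))).indicator
    (fun q ↦ ENNReal.ofReal (q * (2 * (E - u) - q) ^ l)) (w ^ 2) with hK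
  have hKm : Measurable (Function.uncurry K) := by
    have : Function.uncurry K = {p : ℝ × ℝ | p.1 ^ 2 < 2 * (p.2 - u)}.indicator
        (fun p ↦ ENNReal.ofReal (p.1 ^ 2 * (2 * (p.2 - u) - p.1 ^ 2) ^ l)) := by
      ext p
      simp [hK, Function.uncurry_def, indicator_apply]
    rw [this]
    exact Measurable.indicator (by fun_prop) (measurableSet_lt (by fun_prop) (by fun_prop))
  have hinner (w : ℝ) : ∫⁻ t in Ioi (0 : ℝ), F w (w ^ 2 + t) =
      ∫⁻ E in Ioi u, ENNReal.ofReal (2 * r ^ (2 * l)) * (φ E * K w E) := by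
    have h := lintegral_Ioi_comp_energy (w ^ 2) u (fun E ↦ F w (2 * (E - u)))
    have hsimp (t : ℝ) : 2 * ((w ^ 2 + t) / 2 + u - u) = w ^ 2 + t := by ring
    simp only [hsimp] at h
    have hsub : Ioi (w ^ 2 / 2 + u) ⊆ Ioi u := Ioi_subset_Ioi (by linarith [sq_nonneg w])
    rw [h, ← lintegral_const_mul' _ _ (by simp), ← inter_eq_self_of_subset_left hsub,
      ← Measure.restrict_restrict measurableSet_Ioi, ← lintegral_indicator measurableSet_Ioi]
    congr 1 with E
    by_cases hE : w ^ 2 / 2 + u < E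
    · have hE' : w ^ 2 < 2 * (E - u) := by linarith
      rw [indicator_of_mem (mem_Ioi.2 hE), hK]
      simp only [indicator_of_mem (mem_Iio.2 hE'), hFdef]
      rw [show 2 * (E - u) / 2 + u = E by ring, ENNReal.ofReal_mul (by positivity),
        ENNReal.ofReal_mul zero_le_two, ENNReal.ofReal_ofNat]
      ring
    · have hE' : ¬ w ^ 2 < 2 * (E - u) := by linarith
      simp [hK, hE, hE']
  have hradial (E : ℝ) (hE : E ∈ Ioi u) :
      ∫⁻ w, ENNReal.ofReal (2 * r ^ (2 * l)) * (φ E * K w E) =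
        ENNReal.ofReal (2 * r ^ (2 * l) * (2 ^ (l + 3 / 2) * c)) *
          (φ E * ENNReal.ofReal ((E - u) ^ (l + 3 / 2))) := by
    have hE0 : 0 < E - u := sub_pos.2 hE
    have hKE : Measurable fun w ↦ K w E := by fun_prop
    rw [lintegral_const_mul _ (by fun_prop), lintegral_const_mul _ hKE,
      lintegral_radial_velocity l hl _ (by positivity), ← hc, mul_rpow zero_le_two hE0.le,
      mul_right_comm, mul_comm _ ((E - u) ^ _),
      ENNReal.ofReal_mul (p := (E - u) ^ (l + 3 / 2)) (by positivity),
      ENNReal.ofReal_mul (p := 2 * r ^ (2 * l)) (by positivity)]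
    ring
  simp_rw [hstart]
  rw [lintegral_dot3_norm3 x (hx ▸ hr), lintegral_cylindrical F hF]
  simp_rw [hinner]
  rw [lintegral_lintegral_swap (by fun_prop), setLIntegral_congr_fun measurableSet_Ioi hradial,
    lintegral_const_mul _ (by fun_prop), ← mul_assoc, ← ENNReal.ofReal_mul pi_nonneg]
  congr 2
  rw [show l + 5 / 2 = l + 3 / 2 + 1 by ring, rpow_add_one two_ne_zero]
  ring
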